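/- The function F_N(v) = (Σ_{i=1}^N |v_i|^N) · 2^{N−1} / N^{(N+2)/2} is a probability density on S^{N−1}(√N) with respect to the uniform probability measure, i.e., ∫_{S^{N−1}(√N)} F_N dσ^N = 1, and it is symmetric under permutations of the coordinates. -/

import Mathlib

open MeasureTheory Filter Topology

/-- The uniform (normalized Hausdorff) probability measure on the sphere of radius `r`
in `ℝ^N`. -/
noncomputable def uniformSphere (N : ℕ) (r : ℝ) : Measure (EuclideanSpace ℝ (Fin N)) :=
  ((μH[(N : ℝ) - 1]) (Metric.sphere (0 : EuclideanSpace ℝ (Fin N)) r))⁻¹ •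
    ((μH[(N : ℝ) - 1]).restrict (Metric.sphere (0 : EuclideanSpace ℝ (Fin N)) r))

lemma sphere_hausdorff_pos (n : ℕ) (r : ℝ) (hr : 0 < r) :
    (μH[(n : ℝ)]) (Metric.sphere (0 : EuclideanSpace ℝ (Fin (n+1))) r) ≠ 0 := by
  intro h0
  let p : EuclideanSpace ℝ (Fin (n+1)) → (Fin n → ℝ) := fun x i => x i.succ
  have hp : LipschitzWith 1 p := by
    refine LipschitzWith.of_dist_le_mul fun x y => ?_
    rw [NNReal.coe_one, one_mul, dist_pi_le_iff dist_nonneg]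
    intro i
    have := PiLp.norm_apply_le (x - y) i.succ
    rw [dist_eq_norm, dist_eq_norm]
    exact this
  have h1 := hp.hausdorffMeasure_image_le (d := (n:ℝ)) (by positivity)
    (Metric.sphere (0 : EuclideanSpace ℝ (Fin (n+1))) r)
  rw [h0, mul_zero] at h1
  let U : Set (Fin n → ℝ) := {y | ∑ i, y i ^ 2 < r ^ 2}
  have hU : IsOpen U := isOpen_lt (by fun_prop) (by fun_prop)
  have hne : U.Nonempty := ⟨0, by simp [U]; positivity⟩
  have hsub : U ⊆ p '' (Metric.sphere (0 : EuclideanSpace ℝ (Fin (n+1))) r) := by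
    intro y hy
    have hy' : ∑ i, y i ^ 2 < r ^ 2 := hy
    refine ⟨WithLp.toLp 2 (Fin.cons (√(r^2 - ∑ i, y i ^ 2)) y), ?_, ?_⟩
    · rw [mem_sphere_zero_iff_norm, EuclideanSpace.norm_eq, Fin.sum_univ_succ]
      simp only [Fin.cons_zero, Fin.cons_succ, Real.norm_eq_abs, sq_abs]
      rw [Real.sq_sqrt (by linarith), sub_add_cancel, Real.sqrt_sq hr.le]
    · ext i
      simp [p]
  have h2 := hU.measure_pos volume hne
  have h3 : (μH[(n : ℝ)] : Measure (Fin n → ℝ)) = volume := by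
    simpa using hausdorffMeasure_pi_real (ι := Fin n)
  rw [h3] at h1
  exact absurd (lt_of_lt_of_le h2 ((measure_mono hsub).trans h1)) (lt_irrefl _)

lemma sphere_hausdorff_lt_top (n : ℕ) (r : ℝ) (hr : 0 < r) :
    (μH[(n : ℝ)]) (Metric.sphere (0 : EuclideanSpace ℝ (Fin (n+1))) r) < ⊤ := by
  let w : Fin (n+1) → ℝ → (Fin n → ℝ) → EuclideanSpace ℝ (Fin (n+1)) :=
    fun i s y => WithLp.toLp 2 (i.insertNth s y)
  let f : Fin (n+1) → ℝ → (Fin n → ℝ) → EuclideanSpace ℝ (Fin (n+1)) :=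
    fun i s y => (r / ‖w i s y‖) • w i s y
  have h3 : (μH[(n : ℝ)] : Measure (Fin n → ℝ)) = volume := by
    simpa using hausdorffMeasure_pi_real (ι := Fin n)
  have hf : ∀ i s, s ≠ 0 → (μH[(n : ℝ)]) (f i s '' Set.Icc (-1) 1) < ⊤ := by
    intro i s hs
    have hw0 : ∀ y, w i s y ≠ 0 := by
      intro y h
      apply hs
      have := congrArg (fun v : EuclideanSpace ℝ (Fin (n+1)) => v i) h
      simpa [w] using this
    have hw : ContDiff ℝ 1 (w i s) := by
      rw [contDiff_euclidean]
      intro j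
      refine Fin.succAboveCases i ?_ (fun j => ?_) j
      · simp only [w, Fin.insertNth_apply_same]; fun_prop
      · simp only [w, Fin.insertNth_apply_succAbove]; fun_prop
    have hfc : ContDiff ℝ 1 (f i s) :=
      (contDiff_const.div (hw.norm ℝ hw0) (fun y => norm_ne_zero_iff.2 (hw0 y))).smul hw
    obtain ⟨K, hK⟩ := hfc.contDiffOn.exists_lipschitzOnWith one_ne_zero
      (convex_Icc (-1 : Fin n → ℝ) 1) isCompact_Icc
    refine (hK.hausdorffMeasure_image_le (d := (n:ℝ)) (by positivity)).trans_lt ?_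
    rw [h3]
    exact ENNReal.mul_lt_top (ENNReal.rpow_lt_top_of_nonneg (by positivity) (by simp))
      isCompact_Icc.measure_lt_top
  have hcov : Metric.sphere (0 : EuclideanSpace ℝ (Fin (n+1))) r ⊆
      ⋃ i, (f i 1 '' Set.Icc (-1) 1 ∪ f i (-1) '' Set.Icc (-1) 1) := by
    intro v hv
    rw [mem_sphere_zero_iff_norm] at hv
    obtain ⟨i, hi⟩ := Finite.exists_max (fun i => |v i|)
    have hM : 0 < |v i| := by
      by_contra hcon
      have : v = 0 := by
        ext j
        have := hi j
        have h5 : |v j| ≤ 0 := by linarith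
        simpa using h5
      rw [this, norm_zero] at hv
      exact hr.ne hv
    have key : f i (v i / |v i|) (fun j => v (i.succAbove j) / |v i|) = v := by
      have hwv : w i (v i / |v i|) (fun j => v (i.succAbove j) / |v i|) = |v i|⁻¹ • v := by
        ext j
        refine Fin.succAboveCases i ?_ (fun j => ?_) j
        · simp [w, div_eq_inv_mul]
        · simp [w, div_eq_inv_mul]
      simp only [f]
      rw [hwv, norm_smul, hv, smul_smul, Real.norm_eq_abs, abs_inv, abs_abs]
      have : r / (|v i|⁻¹ * r) * |v i|⁻¹ = 1 := by field_simp
      rw [this, one_smul]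
    have hmem : (fun j => v (i.succAbove j) / |v i|) ∈ Set.Icc (-1 : Fin n → ℝ) 1 := by
      have : ∀ j, abs (v (i.succAbove j) / abs (v i)) ≤ 1 := by
        intro j
        rw [abs_div, abs_abs]
        exact div_le_one_of_le₀ (hi _) hM.le
      exact ⟨fun j => (abs_le.1 (this j)).1, fun j => (abs_le.1 (this j)).2⟩
    refine Set.mem_iUnion.2 ⟨i, ?_⟩
    rcases le_total 0 (v i) with h | h
    · left
      have e : v i / |v i| = 1 := by
        rw [div_eq_one_iff_eq hM.ne', abs_of_nonneg h]
      rw [e] at key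
      exact ⟨_, hmem, key⟩
    · right
      have e : v i / |v i| = -1 := by
        rw [div_eq_iff hM.ne', abs_of_nonpos h]; ring
      rw [e] at key
      exact ⟨_, hmem, key⟩
  refine (measure_mono hcov).trans_lt ?_
  refine (measure_iUnion_le _).trans_lt ?_
  rw [tsum_fintype]
  refine ENNReal.sum_lt_top.2 fun i _ => ?_
  exact measure_union_lt_top (hf i 1 one_ne_zero) (hf i (-1) (by norm_num))

lemma gauss_one (m : ℕ) : ∫ t : ℝ, |t| ^ m * Real.exp (-t ^ 2) = Real.Gamma (((m:ℝ) + 1) / 2) := by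
  have h := integral_comp_abs (f := fun t : ℝ => t ^ m * Real.exp (-t ^ 2))
  simp only [sq_abs] at h
  rw [h]
  have h2 := integral_rpow_mul_exp_neg_rpow (p := 2) (q := m) (by norm_num)
    (by have : (0:ℝ) ≤ m := by positivity
        linarith)
  simp only [Real.rpow_natCast, Real.rpow_two] at h2
  rw [h2]; ring

lemma gauss_int (m : ℕ) :
    IntegrableOn (fun t : ℝ => t ^ m * Real.exp (-t ^ 2)) (Set.Ioi 0) := by
  have h2 := integrableOn_rpow_mul_exp_neg_rpow (p := 2) (s := m)
    (by have : (0:ℝ) ≤ m := by positivity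
        linarith) (by norm_num)
  simpa only [Real.rpow_natCast, Real.rpow_two] using h2

lemma gauss_norm_integrable (N m : ℕ) (hN : 2 ≤ N) :
    Integrable (fun x : EuclideanSpace ℝ (Fin N) => ‖x‖ ^ m * Real.exp (-‖x‖ ^ 2)) := by
  have : Nonempty (Fin N) := ⟨⟨0, by omega⟩⟩
  rw [integrable_fun_norm_addHaar volume (f := fun t : ℝ => t ^ m * Real.exp (-t ^ 2))]
  refine (gauss_int (N - 1 + m)).congr_fun (fun t _ => ?_) measurableSet_Ioi
  simp [pow_add, mul_assoc]

lemma gauss_norm (N : ℕ) (hN : 2 ≤ N) :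
    ∫ x : EuclideanSpace ℝ (Fin N), ‖x‖ ^ N * Real.exp (-‖x‖ ^ 2) =
      √Real.pi ^ N * Real.Gamma N / Real.Gamma ((N:ℝ) / 2) := by
  have : Nonempty (Fin N) := ⟨⟨0, by omega⟩⟩
  have hN0 : (0:ℝ) < N := by positivity
  rw [integral_fun_norm_addHaar volume (fun t : ℝ => t ^ N * Real.exp (-t ^ 2))]
  have h2 := integral_rpow_mul_exp_neg_rpow (p := 2) (q := ((N - 1 + N : ℕ) : ℝ)) (by norm_num)
    (by have : (0:ℝ) ≤ ((N - 1 + N : ℕ) : ℝ) := by positivity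
        linarith)
  simp only [Real.rpow_natCast, Real.rpow_two] at h2
  have h3 : ∫ y in Set.Ioi (0:ℝ), y ^ (Module.finrank ℝ (EuclideanSpace ℝ (Fin N)) - 1) •
      (y ^ N * Real.exp (-y ^ 2)) = 1 / 2 * Real.Gamma N := by
    have e : (((N - 1 + N : ℕ) : ℝ) + 1) / 2 = N := by
      have : (N - 1 + N : ℕ) + 1 = 2 * N := by omega
      have h : (((N - 1 + N : ℕ) : ℝ) + 1) = 2 * N := by exact_mod_cast this
      rw [h]; ring
    rw [e] at h2
    rw [← h2]
    refine setIntegral_congr_fun measurableSet_Ioi (fun t _ => ?_)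
    simp [pow_add, mul_assoc]
  rw [h3, Measure.real, EuclideanSpace.volume_ball]
  have hG : 0 < Real.Gamma ((N:ℝ)/2) := Real.Gamma_pos_of_pos (by positivity)
  rw [Fintype.card_fin, Real.Gamma_add_one (by positivity)]
  simp only [ENNReal.ofReal_one, one_pow, one_mul, finrank_euclideanSpace, Fintype.card_fin]
  rw [ENNReal.toReal_ofReal (by positivity)]
  simp only [nsmul_eq_mul, smul_eq_mul]
  field_simp

lemma gauss_coord (N : ℕ) (i : Fin N) :
    ∫ x : EuclideanSpace ℝ (Fin N), |x i| ^ N * Real.exp (-‖x‖ ^ 2) =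
      Real.Gamma (((N:ℝ) + 1) / 2) * √Real.pi ^ (N - 1) := by
  have hmp := EuclideanSpace.volume_preserving_symm_measurableEquiv_toLp (Fin N)
  have h1 := hmp.integral_comp'
    (fun y : Fin N → ℝ => ∏ j, ((if j = i then |y j| ^ N else 1) * Real.exp (-(y j) ^ 2)))
  have h2 := integral_fintype_prod_volume_eq_prod (𝕜 := ℝ)
    (fun (j : Fin N) (t : ℝ) => (if j = i then |t| ^ N else 1) * Real.exp (-t ^ 2))
  have h0 : ∫ t : ℝ, Real.exp (-t ^ 2) = √Real.pi := by
    simpa using integral_gaussian 1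
  rw [h2] at h1
  have h3 : ∏ j : Fin N, ∫ t : ℝ, (if j = i then |t| ^ N else 1) * Real.exp (-t ^ 2) =
      Real.Gamma (((N:ℝ) + 1) / 2) * √Real.pi ^ (N - 1) := by
    rw [← Finset.mul_prod_erase _ _ (Finset.mem_univ i)]
    simp only [if_true]
    rw [gauss_one]
    congr 1
    rw [Finset.prod_congr rfl (g := fun _ => √Real.pi)]
    · simp
    · intro j hj
      simp [Finset.ne_of_mem_erase hj, h0]
  rw [← h3, ← h1]
  refine integral_congr_ae (Eventually.of_forall fun x => ?_)
  simp only [Finset.prod_mul_distrib, Finset.prod_ite_eq', Finset.mem_univ, if_true]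
  rw [← Real.exp_sum, EuclideanSpace.norm_sq_eq]
  simp

lemma rot_integral {N : ℕ} (σ : Measure (EuclideanSpace ℝ (Fin N)))
    (hσ : ∀ R : EuclideanSpace ℝ (Fin N) ≃ₗᵢ[ℝ] EuclideanSpace ℝ (Fin N), MeasurePreserving R σ σ)
    (g : ℝ → ℝ) (x : EuclideanSpace ℝ (Fin N)) (i : Fin N) :
    ∫ v, |inner ℝ x v| ^ N * g ‖v‖ ∂σ = ‖x‖ ^ N * ∫ v, |v i| ^ N * g ‖v‖ ∂σ := by
  set e : EuclideanSpace ℝ (Fin N) := EuclideanSpace.single i 1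
  have hx : ‖‖x‖ • e‖ = ‖x‖ := by simp [e, norm_smul]
  set R := (ℝ ∙ (‖x‖ • e - x))ᗮ.reflection with hR
  have hRx : R (‖x‖ • e) = x := Submodule.reflection_sub hx
  have h := (hσ R).integral_comp R.toHomeomorph.measurableEmbedding
    (fun v => |inner ℝ x v| ^ N * g ‖v‖)
  rw [← h, ← integral_const_mul]
  refine integral_congr_ae (Eventually.of_forall fun v => ?_)
  simp only [LinearIsometryEquiv.norm_map]
  have : inner ℝ x (R v) = ‖x‖ * v i := by
    nth_rewrite 1 [← hRx]
    rw [LinearIsometryEquiv.inner_map_map, inner_smul_left, EuclideanSpace.inner_single_left]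
    simp
  rw [this, abs_mul, abs_norm, mul_pow, mul_assoc]

lemma key_identity (N : ℕ) (hN : 2 ≤ N) (σ : Measure (EuclideanSpace ℝ (Fin N)))
    [IsProbabilityMeasure σ]
    (hσ : ∀ R : EuclideanSpace ℝ (Fin N) ≃ₗᵢ[ℝ] EuclideanSpace ℝ (Fin N), MeasurePreserving R σ σ)
    (hs : ∀ᵐ v ∂σ, ‖v‖ = √N) (i : Fin N) :
    (∫ v, |v i| ^ N ∂σ) * (√Real.pi ^ N * Real.Gamma N / Real.Gamma ((N:ℝ) / 2)) =
      √N ^ N * (Real.Gamma (((N:ℝ) + 1) / 2) * √Real.pi ^ (N - 1)) := by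
  have hint : Integrable (Function.uncurry fun (x v : EuclideanSpace ℝ (Fin N)) =>
      |inner ℝ x v| ^ N * Real.exp (-‖x‖ ^ 2)) (volume.prod σ) := by
    have hb : Integrable (fun v : EuclideanSpace ℝ (Fin N) => ‖v‖ ^ N) σ := by
      refine (integrable_const (√N ^ N)).congr ?_
      filter_upwards [hs] with v hv
      rw [hv]
    refine ((gauss_norm_integrable N N hN).mul_prod hb).mono' ?_ ?_
    · apply Continuous.aestronglyMeasurable
      simp only [Function.uncurry_def]
      fun_prop
    · refine Eventually.of_forall fun z => ?_
      simp only [Function.uncurry_def]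
      rw [Real.norm_eq_abs, abs_of_nonneg (by positivity)]
      have : |inner ℝ z.1 z.2| ^ N ≤ (‖z.1‖ * ‖z.2‖) ^ N :=
        pow_le_pow_left₀ (abs_nonneg _) (abs_real_inner_le_norm _ _) _
      calc _ ≤ (‖z.1‖ * ‖z.2‖) ^ N * Real.exp (-‖z.1‖ ^ 2) := by gcongr
        _ = _ := by ring
  have hsw := integral_integral_swap hint
  have hL : ∀ x : EuclideanSpace ℝ (Fin N),
      ∫ v, |inner ℝ x v| ^ N * Real.exp (-‖x‖ ^ 2) ∂σ =
        (∫ v, |v i| ^ N ∂σ) * (‖x‖ ^ N * Real.exp (-‖x‖ ^ 2)) := by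
    intro x
    have := rot_integral σ hσ (fun _ => 1) x i
    simp only [mul_one] at this
    rw [integral_mul_const, this]; ring
  have hRt : ∀ v : EuclideanSpace ℝ (Fin N),
      ∫ x, |inner ℝ x v| ^ N * Real.exp (-‖x‖ ^ 2) =
        ‖v‖ ^ N * (Real.Gamma (((N:ℝ) + 1) / 2) * √Real.pi ^ (N - 1)) := by
    intro v
    have := rot_integral volume (fun R => R.measurePreserving) (fun t => Real.exp (-t ^ 2)) v i
    rw [gauss_coord] at this
    rw [← this]
    simp only [real_inner_comm]
  simp only [hL, hRt] at hsw
  rw [integral_const_mul, gauss_norm N hN, integral_mul_const] at hsw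
  rw [hsw]
  congr 1
  rw [integral_congr_ae (g := fun _ => √N ^ N)]
  · simp
  · filter_upwards [hs] with v hv
    rw [hv]

lemma coord_moment (N : ℕ) (hN : 2 ≤ N) (σ : Measure (EuclideanSpace ℝ (Fin N)))
    [IsProbabilityMeasure σ]
    (hσ : ∀ R : EuclideanSpace ℝ (Fin N) ≃ₗᵢ[ℝ] EuclideanSpace ℝ (Fin N), MeasurePreserving R σ σ)
    (hs : ∀ᵐ v ∂σ, ‖v‖ = √N) (i : Fin N) :
    (∫ v, |v i| ^ N ∂σ) = √N ^ N / 2 ^ (N - 1) := by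
  have h := key_identity N hN σ hσ hs i
  have hd := Real.Gamma_mul_Gamma_add_half ((N:ℝ)/2)
  have e1 : (N:ℝ)/2 + 1/2 = ((N:ℝ)+1)/2 := by ring
  have e2 : 2 * ((N:ℝ)/2) = N := by ring
  rw [e1, e2] at hd
  have hN0 : (0:ℝ) < N := by positivity
  have e3 : (2:ℝ) ^ (1 - (N:ℝ)) = (2 ^ (N - 1))⁻¹ := by
    rw [← Real.rpow_natCast, Nat.cast_sub (by omega), ← Real.rpow_neg (by norm_num)]
    congr 1; push_cast; ring
  rw [e3] at hd
  have hG : 0 < Real.Gamma ((N:ℝ)/2) := Real.Gamma_pos_of_pos (by positivity)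
  have hG2 : 0 < Real.Gamma (N:ℝ) := Real.Gamma_pos_of_pos (by positivity)
  have hp : 0 < √Real.pi := Real.sqrt_pos.2 Real.pi_pos
  have hpp : √Real.pi ^ N = √Real.pi ^ (N - 1) * √Real.pi := by
    rw [← pow_succ]; congr 1; omega
  have hd' : Real.Gamma (((N:ℝ) + 1) / 2) =
      Real.Gamma N * (2 ^ (N - 1))⁻¹ * √Real.pi / Real.Gamma ((N:ℝ)/2) := by
    rw [eq_div_iff hG.ne', ← hd]; ring
  rw [hd', hpp] at h
  have hne : √Real.pi ^ (N - 1) * √Real.pi * Real.Gamma N / Real.Gamma ((N:ℝ) / 2) ≠ 0 := by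
    positivity
  apply mul_right_cancel₀ hne
  rw [h]
  field_simp

lemma hausdorff_facts (N : ℕ) (hN : 2 ≤ N) (r : ℝ) (hr : 0 < r) :
    (μH[(N : ℝ) - 1]) (Metric.sphere (0 : EuclideanSpace ℝ (Fin N)) r) ≠ 0 ∧
    (μH[(N : ℝ) - 1]) (Metric.sphere (0 : EuclideanSpace ℝ (Fin N)) r) ≠ ⊤ := by
  obtain ⟨n, rfl⟩ : ∃ n, N = n + 1 := ⟨N - 1, by omega⟩
  have : ((n + 1 : ℕ) : ℝ) - 1 = n := by push_cast; ring
  rw [this]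
  exact ⟨sphere_hausdorff_pos n r hr, (sphere_hausdorff_lt_top n r hr).ne⟩

/-- `F_N(v) = (Σ_i |v_i|^N)·2^{N−1}/N^{(N+2)/2}` is a symmetric probability density on
`S^{N−1}(√N)`. -/
theorem varying_polynomial_is_symmetric_density (N : ℕ) (hN : 2 ≤ N) :
    (∫ v, (∑ i, |v i| ^ (N : ℕ)) * 2 ^ (N - 1) / (N : ℝ) ^ (((N : ℝ) + 2) / 2)
        ∂(uniformSphere N (Real.sqrt N)) = 1) ∧
      (∀ (τ : Equiv.Perm (Fin N)) (v : EuclideanSpace ℝ (Fin N)),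
        (∑ i, |(fun j => v (τ j)) i| ^ (N : ℕ)) * 2 ^ (N - 1) /
            (N : ℝ) ^ (((N : ℝ) + 2) / 2) =
          (∑ i, |v i| ^ (N : ℕ)) * 2 ^ (N - 1) / (N : ℝ) ^ (((N : ℝ) + 2) / 2)) := by
  have hN0 : (0:ℝ) < N := by positivity
  have hr : 0 < √(N:ℝ) := Real.sqrt_pos.2 hN0
  refine ⟨?_, fun τ v => ?_⟩
  · obtain ⟨h0, ht⟩ := hausdorff_facts N hN (√N) hr
    have : IsProbabilityMeasure (uniformSphere N (√N)) := by
      constructor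
      simp only [uniformSphere, Measure.smul_apply, Measure.restrict_apply MeasurableSet.univ,
        Set.univ_inter, smul_eq_mul]
      exact ENNReal.inv_mul_cancel h0 ht
    have hσ : ∀ R : EuclideanSpace ℝ (Fin N) ≃ₗᵢ[ℝ] EuclideanSpace ℝ (Fin N),
        MeasurePreserving R (uniformSphere N (√N)) (uniformSphere N (√N)) := by
      intro R
      have h1 := R.toIsometryEquiv.measurePreserving_hausdorffMeasure ((N:ℝ) - 1)
      have h2 := h1.restrict_preimage
        (s := Metric.sphere (0 : EuclideanSpace ℝ (Fin N)) (√N)) Metric.isClosed_sphere.measurableSet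
      have h3 : R.toIsometryEquiv ⁻¹' (Metric.sphere (0 : EuclideanSpace ℝ (Fin N)) (√N)) =
          Metric.sphere (0 : EuclideanSpace ℝ (Fin N)) (√N) := by
        ext v
        simp
      rw [h3] at h2
      exact h2.smul_measure _
    have hs : ∀ᵐ v ∂(uniformSphere N (√N)), ‖v‖ = √N := by
      refine Measure.ae_smul_measure ?_ _
      filter_upwards [ae_restrict_mem Metric.isClosed_sphere.measurableSet] with v hv
      simpa using hv
    have hi : ∀ i ∈ (Finset.univ : Finset (Fin N)),
        Integrable (fun v : EuclideanSpace ℝ (Fin N) => |v i| ^ N) (uniformSphere N (√N)) := by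
      intro i _
      refine (integrable_const (√N ^ N)).mono' ?_ ?_
      · apply Continuous.aestronglyMeasurable
        fun_prop
      · filter_upwards [hs] with v hv
        rw [Real.norm_eq_abs, abs_of_nonneg (by positivity), ← hv]
        exact pow_le_pow_left₀ (abs_nonneg _) (PiLp.norm_apply_le v i) _
    rw [integral_div, integral_mul_const, integral_finset_sum _ hi]
    simp only [coord_moment N hN _ hσ hs]
    have e : (N : ℝ) ^ (((N : ℝ) + 2) / 2) = N * √N ^ N := by
      rw [Real.sqrt_eq_rpow, ← Real.rpow_natCast, ← Real.rpow_mul hN0.le,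
        add_div, Real.rpow_add hN0]
      norm_num
      rw [mul_comm]
      congr 2
      ring
    rw [e, Finset.sum_const, Finset.card_univ, Fintype.card_fin, nsmul_eq_mul]
    field_simp
  · congr 2
    exact Equiv.sum_comp τ (fun i => |v i| ^ N)
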